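/- Fix an integer r ≥ 1. Let a = X₀ and b = X₁ be the indeterminates of ℝ[a,b], let D₁ be the ℝ-derivation with D₁(a) = a, D₁(b) = b, and let D₂ be the ℝ-derivation with D₂(a) = a^r b, D₂(b) = a^{r−1} b². Define D₁₂ = D₁ ∘ D₂ (first apply D₂, then D₁). Then for all n ≥ 0, D₁₂^n(b) = (∏_{j=0}^{n} (j·r + 1)) · (∏_{j=0}^{n−1} (j·r + 1)) · a^{n(r−1)} · b^{n+1}. (In multifactorial notation, the coefficient is (nr+1)!_r · ((n−1)r+1)!_r and the exponent of a is nr−n.) -/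

import Mathlib

open MvPolynomial Finset

/-!
Give the monomial `a ^ p * b ^ q` the degree `p + q`. Then `D₁` multiplies a monomial by its degree,
while `D₂` multiplies it by its degree and by `a ^ (r - 1) * b`, because `a` and `b` have the same
logarithmic derivative `a ^ (r - 1) * b` under `D₂`. As `a ^ (r - 1) * b` has degree `r`, the degree
after `n` steps is `n * r + 1`, and the next step contributes `(n * r + 1) * ((n + 1) * r + 1)`.
-/

section Derivations

variable {R A : Type*} [CommSemiring R] [CommSemiring A] [Algebra R A]

theorem derivation_pow_of_eq_mul (D : Derivation R A A) {x u : A} (hx : D x = u * x) (k : ℕ) :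
    D (x ^ k) = k * u * x ^ k := by
  cases k with
  | zero => simp
  | succ k =>
    rw [D.leibniz_pow, hx, Nat.add_sub_cancel, nsmul_eq_mul, smul_eq_mul]
    ring

theorem derivation_pow_mul_pow_of_eq_mul (D : Derivation R A A) {x y u : A}
    (hx : D x = u * x) (hy : D y = u * y) (p q : ℕ) :
    D (x ^ p * y ^ q) = (p + q) • (u * (x ^ p * y ^ q)) := by
  rw [D.leibniz, derivation_pow_of_eq_mul D hx, derivation_pow_of_eq_mul D hy, smul_eq_mul,
    smul_eq_mul, nsmul_eq_mul, Nat.cast_add]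
  ring

theorem derivation_comp_pow_mul_pow {D₁ D₂ : Derivation R A A} {a b : A} {s : ℕ}
    (h1a : D₁ a = a) (h1b : D₁ b = b)
    (h2a : D₂ a = a ^ (s + 1) * b) (h2b : D₂ b = a ^ s * b ^ 2) (p q : ℕ) :
    D₁ (D₂ (a ^ p * b ^ q)) =
      ((p + q) * (p + q + (s + 1))) • (a ^ (p + s) * b ^ (q + 1)) := by
  have D₂_a : D₂ a = a ^ s * b * a := by rw [h2a]; ring
  have D₂_b : D₂ b = a ^ s * b * b := by rw [h2b]; ring
  have D₂_monomial : D₂ (a ^ p * b ^ q) = (p + q) • (a ^ (p + s) * b ^ (q + 1)) := by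
    rw [derivation_pow_mul_pow_of_eq_mul D₂ D₂_a D₂_b]
    congr 1
    ring
  have D₁_monomial (i j : ℕ) : D₁ (a ^ i * b ^ j) = (i + j) • (a ^ i * b ^ j) := by
    rw [derivation_pow_mul_pow_of_eq_mul D₁ (h1a.trans (one_mul a).symm)
      (h1b.trans (one_mul b).symm), one_mul]
  rw [D₂_monomial, map_nsmul, D₁_monomial, ← mul_nsmul']
  congr 2
  ring

theorem D12_iterate_b_general {r : ℕ} (hr : 1 ≤ r) {D₁ D₂ : Derivation R A A} {a b : A}
    (h1a : D₁ a = a) (h1b : D₁ b = b)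
    (h2a : D₂ a = a ^ r * b) (h2b : D₂ b = a ^ (r - 1) * b ^ 2) (n : ℕ) :
    (⇑D₁ ∘ ⇑D₂)^[n] b =
      ((∏ j ∈ range (n + 1), (j * r + 1) : ℕ) : A) * ((∏ j ∈ range n, (j * r + 1) : ℕ) : A) *
        (a ^ (n * (r - 1)) * b ^ (n + 1)) := by
  obtain ⟨s, rfl⟩ := Nat.exists_eq_add_of_le' hr
  rw [Nat.add_sub_cancel] at h2b ⊢
  rw [← Nat.cast_mul, ← nsmul_eq_mul]
  induction n with
  | zero => simp
  | succ n ih =>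
    rw [Function.iterate_succ_apply', ih, Function.comp_apply, map_nsmul, map_nsmul,
      derivation_comp_pow_mul_pow h1a h1b h2a h2b, ← mul_nsmul', ← Nat.succ_mul,
      prod_range_succ _ (n + 1), prod_range_succ _ n]
    congr 1
    ring

end Derivations

/-- For `D₁₂ = D₁ ∘ D₂`,
`D₁₂^n(b) = (nr+1)!_r ((n−1)r+1)!_r a^{nr−n} b^{n+1}`. -/
theorem D12_iterate_b (r : ℕ) (hr : 1 ≤ r)
    (D₁ D₂ : Derivation ℝ (MvPolynomial (Fin 2) ℝ) (MvPolynomial (Fin 2) ℝ))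
    (h1a : D₁ (X 0) = X 0) (h1b : D₁ (X 1) = X 1)
    (h2a : D₂ (X 0) = X 0 ^ r * X 1) (h2b : D₂ (X 1) = X 0 ^ (r - 1) * X 1 ^ 2)
    (n : ℕ) :
    (⇑D₁ ∘ ⇑D₂)^[n] (X 1 : MvPolynomial (Fin 2) ℝ) =
      ((∏ j ∈ range (n + 1), (j * r + 1) : ℕ) : MvPolynomial (Fin 2) ℝ) *
        ((∏ j ∈ range n, (j * r + 1) : ℕ) : MvPolynomial (Fin 2) ℝ) *
        (X 0 ^ (n * (r - 1)) * X 1 ^ (n + 1)) :=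
  D12_iterate_b_general hr h1a h1b h2a h2b n
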